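/- Let Γ = (X, R) be an infinite graph such that Γ(x) △ Γ(y) is infinite for all distinct x, y ∈ X. Define x < y iff Γ(y) \ Γ(x) is finite and Γ(x) \ Γ(y) is infinite. Then the structure (X, R, <) is locally rigid. -/

import Mathlib

/-!
Call two vertices of a finite induced subgraph twins if they have the same neighbours apart from
themselves. Given a finite set `U` and finitely many infinite sets of vertices, ultrafilter limits
yield a finite block of any prescribed size in each of these sets, such that the vertices of a
block are twins over `U` and all blocks. If the sizes are distinct powers of two times a number
exceeding `|U|`, the size of a twin class determines the blocks it contains, so automorphisms of the
extended subgraph preserve the twin class of every new vertex.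

Extend `U` in this way by blocks from the sets `Γ(u) △ Γ(v)` with `u ≠ v` in `U`, obtaining `W`. An
automorphism of `W` which moves `u ∈ U` then sends it to a twin outside `U`. Next extend `W` by
blocks inside `Γ(u) \ Γ(v)` or `Γ(v) \ Γ(u)` for all twins `u ∈ U`, `v ∈ W \ U` incomparable
under `<`. Both differences are infinite, and the side can be chosen so that no `u ∈ U` becomes a
twin of a new vertex. Therefore an automorphism of the final set agrees on `U` with an automorphism
of `W`, and the new blocks forbid it to move `u` to an incomparable twin. Moving `u` to a comparable
vertex is impossible because a finite strict order has no such automorphism.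
-/

open Filter

section AlmostInclusion

variable {α : Type*} {s t u : Set α}

/-- Strict inclusion up to finite sets: the paper's `t ⊃_f s`. -/
def AlmostSSubset (s t : Set α) : Prop :=
  (s \ t).Finite ∧ (t \ s).Infinite

lemma AlmostSSubset.irrefl (s : Set α) : ¬ AlmostSSubset s s := fun h => by simpa using h.2

lemma AlmostSSubset.trans (hst : AlmostSSubset s t) (htu : AlmostSSubset t u) :
    AlmostSSubset s u :=
  ⟨(hst.1.union htu.1).subset (sdiff_triangle s t u),
    fun hus => hst.2 ((htu.1.union hus).subset (sdiff_triangle t u s))⟩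

lemma infinite_diff_of_not_almostSSubset (h : (symmDiff s t).Infinite)
    (hst : ¬ AlmostSSubset s t) : (s \ t).Infinite :=
  fun hfin => hst ⟨hfin, fun hfin' => h (hfin.union hfin')⟩

end AlmostInclusion

section Automorphisms

variable {X : Type*} {r : X → X → Prop} {V : Finset X} {g : Equiv.Perm X}

/-- `g` restricts to an automorphism of the finite structure induced by the relation `r` on `V`.
Automorphisms are encoded as permutations of the whole type, with arbitrary values off `V`, so that
passing to a smaller invariant set needs no coercions. -/
structure IsAutOn (r : X → X → Prop) (V : Finset X) (g : Equiv.Perm X) : Prop where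
  mem_iff : ∀ x, g x ∈ V ↔ x ∈ V
  rel_iff : ∀ a ∈ V, ∀ b ∈ V, (r (g a) (g b) ↔ r a b)

lemma isAutOn_ofSubtype [DecidableEq X] (f : Equiv.Perm {x // x ∈ V})
    (hf : ∀ a b : {x // x ∈ V}, r a b ↔ r (f a) (f b)) :
    IsAutOn r V (Equiv.Perm.ofSubtype f) where
  mem_iff := f.ofSubtype_apply_mem_iff_mem
  rel_iff a ha b hb := by
    rw [f.ofSubtype_apply_of_mem ha, f.ofSubtype_apply_of_mem hb]
    exact (hf ⟨a, ha⟩ ⟨b, hb⟩).symm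

lemma IsAutOn.symm (hg : IsAutOn r V g) : IsAutOn r V g.symm := by
  have mem_iff (x : X) : g.symm x ∈ V ↔ x ∈ V := by
    rw [← hg.mem_iff, g.apply_symm_apply]
  refine ⟨mem_iff, fun a ha b hb => ?_⟩
  rw [← hg.rel_iff _ ((mem_iff a).2 ha) _ ((mem_iff b).2 hb), g.apply_symm_apply,
    g.apply_symm_apply]

lemma IsAutOn.not_rel_apply_left [IsStrictOrder X r] (hg : IsAutOn r V g) {a : X} (ha : a ∈ V) :
    ¬ r (g a) a :=
  Set.WellFoundedOn.induction (P := fun b => ¬ r (g b) b) V.finite_toSet.wellFoundedOn ha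
    fun b hb ih hlt =>
      ih (g b) ((hg.mem_iff b).2 hb) hlt ((hg.rel_iff _ ((hg.mem_iff b).2 hb) _ hb).2 hlt)

lemma IsAutOn.not_rel_apply_right [IsStrictOrder X r] (hg : IsAutOn r V g) {a : X} (ha : a ∈ V) :
    ¬ r a (g a) := by
  simpa only [g.symm_apply_apply] using hg.symm.not_rel_apply_left ((hg.mem_iff a).2 ha)

end Automorphisms

section IndiscernibleBlocks

variable {X ι : Type*} {S : ι → Set X}

lemma exists_ultrafilter_le_cofinite {s : Set X} (hs : s.Infinite) :
    ∃ p : Ultrafilter X, (p : Filter X) ≤ cofinite ∧ s ∈ p := by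
  have := hs.cofinite_inf_principal_neBot
  obtain ⟨p, hp⟩ := Ultrafilter.exists_le (cofinite ⊓ 𝓟 s)
  exact ⟨p, hp.trans inf_le_left, hp.trans inf_le_right (mem_principal_self s)⟩

lemma eventually_iff_ultrafilter_eventually (p : Ultrafilter X) (P : X → Prop) :
    ∀ᶠ x in p, (P x ↔ ∀ᶠ y in p, P y) := by
  by_cases h : ∀ᶠ y in p, P y
  · exact h.mono fun x hx => iff_of_true hx h
  · exact (Ultrafilter.eventually_not.2 h).mono fun x hx => iff_of_false hx h

lemma exists_infinite_subset_homogeneous (r : X → X → Prop) (V : Finset X) {s : Set X}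
    (hs : s.Infinite) :
    ∃ t ⊆ s, t.Infinite ∧ (∀ x ∈ t, x ∉ V) ∧ ∀ v ∈ V, ∀ a ∈ t, ∀ b ∈ t, (r v a ↔ r v b) := by
  obtain ⟨p, hp, hsp⟩ := exists_ultrafilter_le_cofinite hs
  let t := {x | x ∈ s ∧ x ∉ V ∧ ∀ v ∈ V, (r v x ↔ ∀ᶠ y in p, r v y)}
  have htp : t ∈ p := by
    refine Eventually.and hsp (Eventually.and (hp V.finite_toSet.compl_mem_cofinite) ?_)
    exact (eventually_all_finset V).2 fun v _ => eventually_iff_ultrafilter_eventually p (r v)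
  refine ⟨t, fun x hx => hx.1, fun hfin => ?_, fun x hx => hx.2.1, fun v hv a ha b hb => ?_⟩
  · exact Ultrafilter.compl_mem_iff_notMem.1 (hp hfin.compl_mem_cofinite) htp
  · exact (ha.2.2 v hv).trans (hb.2.2 v hv).symm

lemma exists_seq_rel_iff_eventually [Finite ι] (r : X → X → Prop) (p : ι → Ultrafilter X)
    (hp : ∀ i, (p i : Filter X) ≤ cofinite) (hS : ∀ i, S i ∈ p i) :
    ∃ x : ℕ → ι → X, (∀ k i, x k i ∈ S i) ∧ ∀ k l, k < l → ∀ i j,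
      x k i ≠ x l j ∧ (r (x k i) (x l j) ↔ ∀ᶠ a in p i, ∀ᶠ b in p j, r a b) := by
  let Typical (i : ι) (a : X) : Prop :=
    a ∈ S i ∧ ∀ j, ((∀ᶠ b in p j, r a b) ↔ ∀ᶠ a' in p i, ∀ᶠ b in p j, r a' b)
  have typical (i : ι) : ∀ᶠ a in p i, Typical i a :=
    Eventually.and (hS i) (eventually_all.2 fun j => eventually_iff_ultrafilter_eventually _ _)
  have exists_next (s : Finset (ι → X)) (j : ι) : ∃ b, Typical j b ∧
      ∀ y ∈ s, ∀ i, y i ≠ b ∧ (r (y i) b ↔ ∀ᶠ b' in p j, r (y i) b') := by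
    refine ((typical j).and ((eventually_all_finset s).2 fun y _ => eventually_all.2 fun i =>
      Eventually.and ?_ (eventually_iff_ultrafilter_eventually _ _))).exists
    exact ((Set.finite_singleton (y i)).eventually_cofinite_notMem.filter_mono (hp j)).mono
      fun b hb => Ne.symm hb
  obtain ⟨x, hxT, hx⟩ := exists_seq_of_forall_finset_exists
    (fun y : ι → X => ∀ i, Typical i (y i))
    (fun y z => ∀ i j, y i ≠ z j ∧ (r (y i) (z j) ↔ ∀ᶠ a in p i, ∀ᶠ b in p j, r a b))
    (fun s hs => by
      choose z hzT hz using exists_next s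
      exact ⟨z, hzT, fun y hy i j =>
        ⟨(hz j y hy i).1, (hz j y hy i).2.trans ((hs y hy i).2 j)⟩⟩)
  exact ⟨x, fun k i => (hxT k i).1, hx⟩

lemma exists_injective_sigma_nat_lt [Finite ι] [LinearOrder ι] (n : ι → ℕ) :
    ∃ pos : (Σ i, Fin (n i)) → ℕ, pos.Injective ∧ ∀ a b, a.1 < b.1 → pos a < pos b := by
  have := Fintype.ofFinite ι
  let φ := (Fintype.orderIsoFinOfCardEq (Σₗ i, Fin (n i)) rfl).symm
  refine ⟨fun a => φ (toLex a), ?_, fun a b hab => ?_⟩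
  · exact Fin.val_injective.comp (φ.injective.comp toLex.injective)
  · exact φ.lt_iff_lt.2 (Sigma.Lex.lt_def.2 (Or.inl hab))

/- All blocks are drawn from one sequence in which earlier terms relate to later ones as their
ultrafilters do. Giving each block a contiguous stretch of the sequence makes the order of two
vertices in different blocks depend on the blocks only. -/
lemma exists_indiscernible_blocks [Finite ι] (Γ : SimpleGraph X) (hS : ∀ i, (S i).Infinite)
    (n : ι → ℕ) :
    ∃ (w : (Σ i, Fin (n i)) ↪ X) (E : ι → ι → Prop), (∀ a, w a ∈ S a.1) ∧
      ∀ a b, a ≠ b → (Γ.Adj (w a) (w b) ↔ E a.1 b.1) := by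
  choose p hp hSp using fun i => exists_ultrafilter_le_cofinite (hS i)
  obtain ⟨x, hxS, hx⟩ := exists_seq_rel_iff_eventually Γ.Adj p hp hSp
  let : LinearOrder ι := LinearOrder.lift' (Finite.equivFin ι) (Finite.equivFin ι).injective
  obtain ⟨pos, pos_inj, pos_lt⟩ := exists_injective_sigma_nat_lt n
  let w (a : Σ i, Fin (n i)) : X := x (pos a) a.1
  have hw : w.Injective := by
    intro a b hab
    by_contra hne
    rcases lt_or_gt_of_ne (pos_inj.ne hne) with h | h
    · exact (hx _ _ h _ _).1 hab
    · exact (hx _ _ h _ _).1 hab.symm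
  let L (i j : ι) : Prop := ∀ᶠ a in p i, ∀ᶠ b in p j, Γ.Adj a b
  have adj_of_pos_lt (a b) (h : pos a < pos b) : Γ.Adj (w a) (w b) ↔ L a.1 b.1 := (hx _ _ h _ _).2
  refine ⟨⟨w, hw⟩, fun i j => if i ≤ j then L i j else L j i, fun a => hxS _ _,
    fun a b hab => ?_⟩
  change Γ.Adj (w a) (w b) ↔ if a.1 ≤ b.1 then L a.1 b.1 else L b.1 a.1
  rcases lt_or_gt_of_ne (pos_inj.ne hab) with h | h
  · have hle : a.1 ≤ b.1 := not_lt.1 fun hlt => h.asymm (pos_lt b a hlt)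
    rw [if_pos hle, adj_of_pos_lt a b h]
  · have hle : b.1 ≤ a.1 := not_lt.1 fun hlt => h.asymm (pos_lt a b hlt)
    rw [Γ.adj_comm, adj_of_pos_lt b a h]
    split_ifs with hle'
    · rw [le_antisymm hle hle']
    · rfl

end IndiscernibleBlocks

section Twins

variable {X : Type*} {Γ : SimpleGraph X} {U V : Finset X} {g : Equiv.Perm X} {a b c : X}

/-- `a` and `b` are (true or false) twins in the subgraph induced on `V`: they have the same
neighbours in `V`, apart from `a` and `b` themselves. -/
def TwinOn (Γ : SimpleGraph X) (V : Finset X) (a b : X) : Prop :=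
  ∀ x ∈ V, x ≠ a → x ≠ b → (Γ.Adj x a ↔ Γ.Adj x b)

lemma TwinOn.refl (Γ : SimpleGraph X) (V : Finset X) (a : X) : TwinOn Γ V a a :=
  fun _ _ _ _ => Iff.rfl

lemma TwinOn.symm (h : TwinOn Γ V a b) : TwinOn Γ V b a :=
  fun x hx hxb hxa => (h x hx hxa hxb).symm

lemma TwinOn.trans (hab : TwinOn Γ V a b) (hbc : TwinOn Γ V b c) (ha : a ∈ V) (hc : c ∈ V) :
    TwinOn Γ V a c := by
  intro x hx hxa hxc
  rcases eq_or_ne x b with rfl | hxb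
  · rcases eq_or_ne a c with rfl | hac
    · rfl
    · rw [Γ.adj_comm x a, hbc a ha hxa.symm hac, Γ.adj_comm a c, hab c hc hac.symm hxc.symm,
        Γ.adj_comm]
  · exact (hab x hx hxa hxb).trans (hbc x hx hxb hxc)

lemma IsAutOn.twinOn_apply_iff (hg : IsAutOn Γ.Adj V g) (ha : a ∈ V) (hb : b ∈ V) :
    TwinOn Γ V (g a) (g b) ↔ TwinOn Γ V a b := by
  constructor
  · intro h x hx hxa hxb
    rw [← hg.rel_iff x hx a ha, ← hg.rel_iff x hx b hb]
    exact h (g x) ((hg.mem_iff x).2 hx) (g.injective.ne hxa) (g.injective.ne hxb)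
  · intro h x hx hxa hxb
    obtain ⟨y, rfl⟩ := g.surjective x
    have hy := (hg.mem_iff y).1 hx
    rw [hg.rel_iff y hy a ha, hg.rel_iff y hy b hb]
    exact h y hy (ne_of_apply_ne g hxa) (ne_of_apply_ne g hxb)

lemma IsAutOn.adj_apply_iff_of_twinOn (hg : IsAutOn Γ.Adj V g) (ha : a ∈ V) (hb : b ∈ V)
    (htwin : TwinOn Γ V (g b) b) (hab : a ≠ b) (hgab : g a ≠ b) :
    Γ.Adj (g a) b ↔ Γ.Adj a b := by
  rw [← htwin (g a) ((hg.mem_iff a).2 ha) (g.injective.ne hab) hgab, hg.rel_iff a ha b hb]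

open Classical in
/-- The twin class of `a` in the subgraph induced on `V`, whose size automorphisms
preserve. -/
noncomputable def twinClass (Γ : SimpleGraph X) (V : Finset X) (a : X) : Finset X :=
  V.filter (TwinOn Γ V a)

lemma mem_twinClass {x : X} : x ∈ twinClass Γ V a ↔ x ∈ V ∧ TwinOn Γ V a x := by
  classical exact Finset.mem_filter

lemma IsAutOn.card_twinClass_apply (hg : IsAutOn Γ.Adj V g) (ha : a ∈ V) :
    (twinClass Γ V (g a)).card = (twinClass Γ V a).card := by
  have hmap : twinClass Γ V (g a) = (twinClass Γ V a).map g.toEmbedding := by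
    ext x
    obtain ⟨y, rfl⟩ := g.surjective x
    rw [Finset.mem_map_equiv, g.symm_apply_apply, mem_twinClass, mem_twinClass, hg.mem_iff]
    exact and_congr_right fun hy => hg.twinOn_apply_iff ha hy
  rw [hmap, Finset.card_map]

/-- Every automorphism of the subgraph induced on `V` preserves the twin class of every vertex of
`V \ U`. -/
structure IsTwinRigidExtension (Γ : SimpleGraph X) (U V : Finset X) : Prop where
  subset : U ⊆ V
  twinOn_apply : ∀ g, IsAutOn Γ.Adj V g → ∀ x ∈ V, x ∉ U → TwinOn Γ V (g x) x

lemma IsTwinRigidExtension.twinOn_apply_left_iff (h : IsTwinRigidExtension Γ U V)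
    (hg : IsAutOn Γ.Adj V g) (ha : a ∈ V) (hb : b ∈ V) (hbU : b ∉ U) :
    TwinOn Γ V (g a) b ↔ TwinOn Γ V a b := by
  have hga := (hg.mem_iff a).2 ha
  have hgb := (hg.mem_iff b).2 hb
  have htwin := h.twinOn_apply g hg b hb hbU
  rw [← hg.twinOn_apply_iff ha hb]
  exact ⟨fun hab => hab.trans htwin.symm hga hgb, fun hab => hab.trans htwin hga hb⟩

/- `g` itself need not preserve `U`: to get `g'`, it is redefined to be the identity on the twin
classes of new vertices. -/
lemma IsTwinRigidExtension.exists_isAutOn (h : IsTwinRigidExtension Γ U V)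
    (hg : IsAutOn Γ.Adj V g) :
    ∃ g', IsAutOn Γ.Adj U g' ∧
      ∀ u ∈ U, (∀ x ∈ V, x ∉ U → ¬ TwinOn Γ V u x) → g' u = g u := by
  classical
  let M (u : X) : Prop := u ∈ V ∧ ∀ x ∈ V, x ∉ U → ¬ TwinOn Γ V u x
  have mem_of_M {u : X} (hu : M u) : u ∈ U := by
    by_contra huU
    exact hu.2 u hu.1 huU (TwinOn.refl Γ V u)
  have M_apply_iff (u : X) : M (g u) ↔ M u := by
    simp only [M, hg.mem_iff]
    exact and_congr_right fun hu => forall₃_congr fun x hx hxU =>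
      not_congr (h.twinOn_apply_left_iff hg hu hx hxU)
  have twin_of_not_M {u : X} (hu : u ∈ V) (huM : ¬ M u) : TwinOn Γ V (g u) u := by
    simp only [M, not_and, not_forall, not_not] at huM
    obtain ⟨x, hx, hxU, hux⟩ := huM hu
    exact ((h.twinOn_apply_left_iff hg hu hx hxU).2 hux).trans hux.symm ((hg.mem_iff u).2 hu) hu
  let g' : Equiv.Perm X := Equiv.Perm.ofSubtype (g.subtypePerm M_apply_iff)
  have g'_of_M {u : X} (hu : M u) : g' u = g u :=
    Equiv.Perm.ofSubtype_subtypePerm_of_mem M_apply_iff hu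
  have g'_of_not_M {u : X} (hu : ¬ M u) : g' u = u :=
    Equiv.Perm.ofSubtype_subtypePerm_of_not_mem M_apply_iff hu
  have adj_iff {a b : X} (ha : M a) (hb : b ∈ V) (hbM : ¬ M b) : Γ.Adj (g a) b ↔ Γ.Adj a b :=
    hg.adj_apply_iff_of_twinOn ha.1 hb (twin_of_not_M hb hbM) (fun hab => hbM (hab ▸ ha))
      (fun hab => hbM (hab ▸ (M_apply_iff a).2 ha))
  refine ⟨g', ⟨fun x => ?_, fun a ha b hb => ?_⟩, fun u hu hM => g'_of_M ⟨h.subset hu, hM⟩⟩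
  · by_cases hx : M x
    · rw [g'_of_M hx]
      exact iff_of_true (mem_of_M ((M_apply_iff x).2 hx)) (mem_of_M hx)
    · rw [g'_of_not_M hx]
  · by_cases haM : M a <;> by_cases hbM : M b
    · rw [g'_of_M haM, g'_of_M hbM, hg.rel_iff a haM.1 b hbM.1]
    · rw [g'_of_M haM, g'_of_not_M hbM, adj_iff haM (h.subset hb) hbM]
    · rw [g'_of_not_M haM, g'_of_M hbM, Γ.adj_comm, adj_iff hbM (h.subset ha) haM, Γ.adj_comm]
    · rw [g'_of_not_M haM, g'_of_not_M hbM]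

end Twins

section TwinBlocks

variable {X ι : Type*} {Γ : SimpleGraph X} {U V : Finset X} {n : ι → ℕ}
  {w : (Σ i, Fin (n i)) ↪ X}

/-- `V` is the disjoint union of `U` and of blocks `w ⟨i, ·⟩`, each consisting of twins in the
subgraph induced on `V`. Different blocks may lie in the same twin class. -/
structure IsTwinBlocks (Γ : SimpleGraph X) (U V : Finset X) (w : (Σ i, Fin (n i)) ↪ X) :
    Prop where
  notMem : ∀ a, w a ∉ U
  mem_iff : ∀ x, x ∈ V ↔ x ∈ U ∨ ∃ a, w a = x
  twinOn : ∀ i k l, TwinOn Γ V (w ⟨i, k⟩) (w ⟨i, l⟩)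

lemma exists_isTwinBlocks [Finite ι] (Γ : SimpleGraph X) (U : Finset X) {S : ι → Set X}
    (hS : ∀ i, (S i).Infinite) (n : ι → ℕ) :
    ∃ (V : Finset X) (w : (Σ i, Fin (n i)) ↪ X), IsTwinBlocks Γ U V w ∧ ∀ a, w a ∈ S a.1 := by
  classical
  have := Fintype.ofFinite ι
  choose T hTS hT hTU hTadj using fun i => exists_infinite_subset_homogeneous Γ.Adj U (hS i)
  obtain ⟨w, E, hwT, hE⟩ := exists_indiscernible_blocks Γ hT n
  have mem_iff (x : X) : x ∈ U ∪ Finset.univ.map w ↔ x ∈ U ∨ ∃ a, w a = x := by simp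
  refine ⟨U ∪ Finset.univ.map w, w, ⟨fun a => hTU _ _ (hwT a), mem_iff, fun i k l => ?_⟩,
    fun a => hTS _ (hwT a)⟩
  intro x hx hxk hxl
  rcases (mem_iff x).1 hx with hxU | ⟨a, rfl⟩
  · exact hTadj i x hxU _ (hwT ⟨i, k⟩) _ (hwT ⟨i, l⟩)
  · rw [hE a _ (ne_of_apply_ne w hxk), hE a _ (ne_of_apply_ne w hxl)]

open Classical in
lemma IsTwinBlocks.card_twinClass [Fintype ι] (h : IsTwinBlocks Γ U V w) {c : X} (hc : c ∈ V) :
    (twinClass Γ V c).card =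
      (U.filter (TwinOn Γ V c)).card + ∑ i with ∃ k, TwinOn Γ V c (w ⟨i, k⟩), n i := by
  let blocks : Finset (Σ i, Fin (n i)) :=
    (Finset.univ.filter fun i => ∃ k, TwinOn Γ V c (w ⟨i, k⟩)).sigma fun _ => Finset.univ
  have mem_blocks (a : Σ i, Fin (n i)) : a ∈ blocks ↔ TwinOn Γ V c (w a) := by
    simp only [blocks, Finset.mem_sigma, Finset.mem_filter_univ, Finset.mem_univ, and_true]
    exact ⟨fun ⟨k, hk⟩ => hk.trans (h.twinOn a.1 k a.2) hc ((h.mem_iff _).2 (.inr ⟨a, rfl⟩)),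
      fun ha => ⟨a.2, ha⟩⟩
  have disjoint : Disjoint (U.filter (TwinOn Γ V c)) (blocks.map w) := by
    rw [Finset.disjoint_right]
    intro x hx hxU
    obtain ⟨a, -, rfl⟩ := Finset.mem_map.1 hx
    exact h.notMem a (Finset.mem_filter.1 hxU).1
  have class_eq :
      twinClass Γ V c = (U.filter (TwinOn Γ V c)).disjUnion (blocks.map w) disjoint := by
    ext x
    rw [mem_twinClass, h.mem_iff, Finset.mem_disjUnion, Finset.mem_filter, Finset.mem_map,
      or_and_right]
    refine or_congr_right ⟨?_, ?_⟩
    · rintro ⟨⟨a, rfl⟩, ha⟩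
      exact ⟨a, (mem_blocks a).2 ha, rfl⟩
    · rintro ⟨a, ha, rfl⟩
      exact ⟨⟨a, rfl⟩, (mem_blocks a).1 ha⟩
  simp only [class_eq, Finset.card_disjUnion, Finset.card_map, blocks, Finset.card_sigma,
    Finset.card_univ, Fintype.card_fin]

lemma eq_of_add_sum_mul_two_pow_eq {K : ℕ} {e : ι → ℕ} (he : e.Injective) {A B : Finset ι}
    {r s : ℕ} (hr : r < K) (hs : s < K)
    (h : r + ∑ i ∈ A, K * 2 ^ e i = s + ∑ i ∈ B, K * 2 ^ e i) : A = B := by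
  rw [← Finset.mul_sum, ← Finset.mul_sum] at h
  have hrs : r = s := by
    simpa only [Nat.add_mul_mod_self_left, Nat.mod_eq_of_lt hr, Nat.mod_eq_of_lt hs]
      using congrArg (· % K) h
  subst hrs
  have hsum : ∑ i ∈ A, 2 ^ e i = ∑ i ∈ B, 2 ^ e i :=
    Nat.eq_of_mul_eq_mul_left (r.zero_le.trans_lt hr) (Nat.add_left_cancel h)
  refine Finset.map_injective ⟨e, he⟩ (Finset.geomSum_injective le_rfl ?_)
  simpa only [Finset.sum_map, Function.Embedding.coeFn_mk] using hsum

lemma IsTwinBlocks.isTwinRigidExtension [Finite ι] (h : IsTwinBlocks Γ U V w) {K : ℕ}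
    {e : ι → ℕ} (he : e.Injective) (hn : ∀ i, n i = K * 2 ^ e i) (hK : U.card < K) :
    IsTwinRigidExtension Γ U V := by
  classical
  have := Fintype.ofFinite ι
  refine ⟨fun u hu => (h.mem_iff u).2 (.inl hu), fun g hg x hx hxU => ?_⟩
  have hgx := (hg.mem_iff x).2 hx
  have hcard := hg.card_twinClass_apply hx
  rw [h.card_twinClass hgx, h.card_twinClass hx] at hcard
  simp only [hn] at hcard
  have same_blocks := eq_of_add_sum_mul_two_pow_eq he
    ((Finset.card_filter_le _ _).trans_lt hK) ((Finset.card_filter_le _ _).trans_lt hK) hcard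
  obtain ⟨⟨i, k⟩, rfl⟩ := ((h.mem_iff x).1 hx).resolve_left hxU
  have hi := same_blocks.ge (Finset.mem_filter_univ i |>.2 ⟨k, TwinOn.refl Γ V _⟩)
  obtain ⟨l, hl⟩ := (Finset.mem_filter_univ i).1 hi
  exact hl.trans (h.twinOn i l k) hgx hx

lemma exists_isTwinRigidExtension [Finite ι] (Γ : SimpleGraph X) (U : Finset X) {S : ι → Set X}
    (hS : ∀ i, (S i).Infinite) :
    ∃ V, IsTwinRigidExtension Γ U V ∧ (∀ i, ∃ z ∈ V, z ∉ U ∧ z ∈ S i) ∧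
      ∀ x ∈ V, x ∉ U → ∃ i, x ∈ S i := by
  let K := U.card + 1
  let e (i : ι) : ℕ := Finite.equivFin ι i
  have he : e.Injective := Fin.val_injective.comp (Finite.equivFin ι).injective
  obtain ⟨V, w, h, hwS⟩ := exists_isTwinBlocks Γ U hS fun i => K * 2 ^ e i
  refine ⟨V, h.isTwinRigidExtension he (fun _ => rfl) U.card.lt_succ_self, fun i => ?_,
    fun x hx hxU => ?_⟩
  · let a : Σ i, Fin (K * 2 ^ e i) := ⟨i, ⟨0, by positivity⟩⟩
    exact ⟨w a, (h.mem_iff _).2 (.inr ⟨a, rfl⟩), h.notMem a, hwS a⟩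
  · obtain ⟨a, rfl⟩ := ((h.mem_iff x).1 hx).resolve_left hxU
    exact ⟨a.1, hwS a⟩

end TwinBlocks

section LocalRigidity

variable {X : Type*} {Γ : SimpleGraph X} {U V W : Finset X} {u v c z : X}

lemma exists_superset_forall_isAutOn_eq_or_twinOn
    (hdiff : Pairwise fun x y => (symmDiff (Γ.neighborSet x) (Γ.neighborSet y)).Infinite)
    (U : Finset X) :
    ∃ W, U ⊆ W ∧ ∀ g, IsAutOn Γ.Adj W g → ∀ u ∈ U, g u = u ∨ g u ∉ U ∧ TwinOn Γ W u (g u) := by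
  classical
  obtain ⟨W, hW, hsep, -⟩ := exists_isTwinRigidExtension Γ U
    (S := fun q : U.offDiag => symmDiff (Γ.neighborSet q.1.1) (Γ.neighborSet q.1.2))
    fun q => hdiff (Finset.mem_offDiag.1 q.2).2.2
  refine ⟨W, hW.subset, fun g hg u hu => or_iff_not_imp_left.2 fun hgu => ?_⟩
  have huW := hW.subset hu
  have hguU : g u ∉ U := by
    intro hguU
    obtain ⟨z, hz, hzU, hzmem⟩ := hsep ⟨(u, g u), Finset.mem_offDiag.2 ⟨hu, hguU, Ne.symm hgu⟩⟩
    have hadj := hg.adj_apply_iff_of_twinOn huW hz (hW.twinOn_apply g hg z hz hzU)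
      (ne_of_mem_of_not_mem hu hzU) (ne_of_mem_of_not_mem hguU hzU)
    simp only [Set.mem_symmDiff, SimpleGraph.mem_neighborSet, hadj, and_not_self, or_self] at hzmem
  have htwin := hW.twinOn_apply g.symm hg.symm (g u) ((hg.mem_iff u).2 huW) hguU
  rw [g.symm_apply_apply] at htwin
  exact ⟨hguU, htwin⟩

/-- The strict order of the paper: `a < b` when the neighbourhood of `a` contains that of `b` up to
a finite set, but not conversely. -/
def AlmostLT (Γ : SimpleGraph X) (a b : X) : Prop :=
  AlmostSSubset (Γ.neighborSet b) (Γ.neighborSet a)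

instance : IsStrictOrder X (AlmostLT Γ) where
  irrefl a := AlmostSSubset.irrefl (Γ.neighborSet a)
  trans _ _ _ hab hbc := AlmostSSubset.trans hbc hab

/-- The neighbours of `u` but not of `v` if `u` and `v` are adjacent, and the neighbours of `v` but
not of `u` otherwise. This choice prevents its elements from becoming twins of `u`, or of a vertex
adjacent to both or neither of `u` and `v`. -/
def separator (Γ : SimpleGraph X) (u v : X) : Set X :=
  {z | (Γ.Adj z u ↔ Γ.Adj u v) ∧ (Γ.Adj z v ↔ ¬ Γ.Adj u v)}

lemma infinite_separator
    (hdiff : (symmDiff (Γ.neighborSet u) (Γ.neighborSet v)).Infinite)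
    (huv : ¬ AlmostLT Γ u v) (hvu : ¬ AlmostLT Γ v u) : (separator Γ u v).Infinite := by
  by_cases hadj : Γ.Adj u v
  · refine (infinite_diff_of_not_almostSSubset hdiff hvu).mono fun z hz => ?_
    exact ⟨iff_of_true hz.1.symm hadj, iff_of_false (fun h => hz.2 h.symm) (not_not.2 hadj)⟩
  · rw [symmDiff_comm] at hdiff
    refine (infinite_diff_of_not_almostSSubset hdiff huv).mono fun z hz => ?_
    exact ⟨iff_of_false (fun h => hz.2 h.symm) hadj, iff_of_true hz.1.symm hadj⟩

lemma not_twinOn_of_mem_separator (hUW : U ⊆ W) (hWV : W ⊆ V) (hu : u ∈ U) (hv : v ∈ W)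
    (hvU : v ∉ U) (huv : TwinOn Γ W u v) (hzW : z ∉ W) (hz : z ∈ separator Γ u v) (hc : c ∈ U) :
    ¬ TwinOn Γ V c z := by
  intro hcz
  have hvc : Γ.Adj v c ↔ ¬ Γ.Adj u v := by
    rw [hcz v (hWV hv) (ne_of_mem_of_not_mem hc hvU).symm (ne_of_mem_of_not_mem hv hzW),
      Γ.adj_comm v z, hz.2]
  rcases eq_or_ne c u with rfl | hcu
  · rw [Γ.adj_comm] at hvc
    exact iff_not_self hvc
  · have huc : Γ.Adj u c ↔ Γ.Adj u v := by
      rw [hcz u (hWV (hUW hu)) hcu.symm (ne_of_mem_of_not_mem (hUW hu) hzW), Γ.adj_comm u z, hz.1]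
    have htwin := huv c (hUW hc) hcu (ne_of_mem_of_not_mem hc hvU)
    rw [Γ.adj_comm c u, Γ.adj_comm c v, huc, hvc] at htwin
    exact iff_not_self htwin

lemma exists_isTwinRigidExtension_separating
    (hdiff : Pairwise fun x y => (symmDiff (Γ.neighborSet x) (Γ.neighborSet y)).Infinite)
    (hUW : U ⊆ W) :
    ∃ V, IsTwinRigidExtension Γ W V ∧ (∀ u ∈ U, ∀ x ∈ V, x ∉ W → ¬ TwinOn Γ V u x) ∧
      ∀ u ∈ U, ∀ v ∈ W, v ∉ U → TwinOn Γ W u v → ¬ AlmostLT Γ u v → ¬ AlmostLT Γ v u →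
        ∃ z ∈ V, z ∉ W ∧ ¬ (Γ.Adj u z ↔ Γ.Adj v z) := by
  classical
  let Q := (U ×ˢ (W \ U)).filter fun q =>
    TwinOn Γ W q.1 q.2 ∧ ¬ AlmostLT Γ q.1 q.2 ∧ ¬ AlmostLT Γ q.2 q.1
  have mem_Q (q : X × X) : q ∈ Q ↔ (q.1 ∈ U ∧ q.2 ∈ W ∧ q.2 ∉ U) ∧
      TwinOn Γ W q.1 q.2 ∧ ¬ AlmostLT Γ q.1 q.2 ∧ ¬ AlmostLT Γ q.2 q.1 := by
    rw [Finset.mem_filter, Finset.mem_product, Finset.mem_sdiff]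
  have infinite (q : Q) : (separator Γ q.1.1 q.1.2).Infinite := by
    obtain ⟨⟨hu, -, hvU⟩, -, hinc⟩ := (mem_Q q).1 q.2
    exact infinite_separator (hdiff (ne_of_mem_of_not_mem hu hvU)) hinc.1 hinc.2
  obtain ⟨V, hV, hsep, hnew⟩ := exists_isTwinRigidExtension Γ W infinite
  refine ⟨V, hV, fun c hc x hx hxW => ?_, fun u hu v hv hvU htwin huv hvu => ?_⟩
  · obtain ⟨q, hxq⟩ := hnew x hx hxW
    obtain ⟨⟨hu, hv, hvU⟩, htwin, -⟩ := (mem_Q q).1 q.2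
    exact not_twinOn_of_mem_separator hUW hV.subset hu hv hvU htwin hxW hxq hc
  · obtain ⟨z, hz, hzW, hzuv⟩ := hsep ⟨(u, v), (mem_Q _).2 ⟨⟨hu, hv, hvU⟩, htwin, huv, hvu⟩⟩
    refine ⟨z, hz, hzW, fun hiff => ?_⟩
    rw [Γ.adj_comm u, Γ.adj_comm v, hzuv.1, hzuv.2] at hiff
    exact iff_not_self hiff

theorem exists_superset_forall_isAutOn_eq
    (hdiff : Pairwise fun x y => (symmDiff (Γ.neighborSet x) (Γ.neighborSet y)).Infinite)
    (U : Finset X) :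
    ∃ V, U ⊆ V ∧ ∀ g, IsAutOn Γ.Adj V g → IsAutOn (AlmostLT Γ) V g → ∀ u ∈ U, g u = u := by
  obtain ⟨W, hUW, hW⟩ := exists_superset_forall_isAutOn_eq_or_twinOn hdiff U
  obtain ⟨V, hV, hnotTwin, hsep⟩ := exists_isTwinRigidExtension_separating hdiff hUW
  refine ⟨V, hUW.trans hV.subset, fun g hadj hlt u hu => ?_⟩
  have huW := hUW hu
  have huV := hV.subset huW
  obtain ⟨g', hg', hg'_eq⟩ := hV.exists_isAutOn hadj
  have hguW : g u ∈ W := by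
    rw [← hg'_eq u huW (hnotTwin u hu)]
    exact (hg'.mem_iff u).2 huW
  have hcases := hW g' hg' u hu
  rw [hg'_eq u huW (hnotTwin u hu)] at hcases
  refine hcases.resolve_right fun ⟨hguU, htwin⟩ => ?_
  obtain ⟨z, hz, hzW, hzsep⟩ := hsep u hu (g u) hguW hguU htwin
    (hlt.not_rel_apply_right huV) (hlt.not_rel_apply_left huV)
  exact hzsep (hadj.adj_apply_iff_of_twinOn huV hz (hV.twinOn_apply g hadj z hz hzW)
    (ne_of_mem_of_not_mem huW hzW) (ne_of_mem_of_not_mem hguW hzW)).symm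

end LocalRigidity

/-- Γ an infinite graph with all symmetric differences of neighbour sets
    infinite; x < y iff Γ(y) \ Γ(x) is finite and Γ(x) \ Γ(y) is infinite.
    Then (X, R, <) is locally rigid. -/
theorem stmt10 {X : Type*} [Infinite X] (Γ : SimpleGraph X)
    (hdiff : ∀ x y : X, x ≠ y →
      (symmDiff (Γ.neighborSet x) (Γ.neighborSet y)).Infinite) :
    ∀ U : Finset X, ∃ V : Finset X, U ⊆ V ∧
      ∀ f : {x // x ∈ V} ≃ {x // x ∈ V},
        (∀ a b : {x // x ∈ V}, Γ.Adj (a : X) (b : X) ↔ Γ.Adj (f a : X) (f b : X)) →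
        (∀ a b : {x // x ∈ V},
          ((Γ.neighborSet (b : X) \ Γ.neighborSet (a : X)).Finite ∧
            (Γ.neighborSet (a : X) \ Γ.neighborSet (b : X)).Infinite) ↔
          ((Γ.neighborSet (f b : X) \ Γ.neighborSet (f a : X)).Finite ∧
            (Γ.neighborSet (f a : X) \ Γ.neighborSet (f b : X)).Infinite)) →
        ∀ a : {x // x ∈ V}, (a : X) ∈ U → f a = a := by
  classical
  intro U
  obtain ⟨V, hUV, hV⟩ := exists_superset_forall_isAutOn_eq (fun x y => hdiff x y) U
  refine ⟨V, hUV, fun f hadj hlt a ha => Subtype.ext ?_⟩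
  rw [← Equiv.Perm.ofSubtype_apply_coe f a]
  exact hV _ (isAutOn_ofSubtype f hadj) (isAutOn_ofSubtype (r := AlmostLT Γ) f hlt) a ha
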